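/- Let E ⊆ ℝⁿ be a bounded measurable set that is Schwarz symmetric with respect to the x₁-axis, with the additional property that for each x₁ ∈ ℝ the signed distance section x' ↦ d̄_E(x₁,x') is radially symmetric and nondecreasing in |x'|. Then for any bounded measurable set F ⊆ ℝⁿ, the Schwarz symmetrization F* of F with respect to the x₁-axis satisfies ∫_{F*} d̄_E dx ≤ ∫_F d̄_E dx. -/

import Mathlib

open Set Metric Classical MeasureTheory

/-- Euclidean distance on ℝ × ℝ^{n-1}. -/
noncomputable def pdist {m : ℕ} (x y : ℝ × EuclideanSpace ℝ (Fin m)) : ℝ :=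
  Real.sqrt ((x.1 - y.1)^2 + (dist x.2 y.2)^2)

/-- Euclidean distance from a point to a set in ℝ × ℝ^{n-1}. -/
noncomputable def pInfDist {m : ℕ} (A : Set (ℝ × EuclideanSpace ℝ (Fin m)))
    (x : ℝ × EuclideanSpace ℝ (Fin m)) : ℝ :=
  sInf (pdist x '' A)

/-- Signed (Euclidean) distance to a set in ℝ × ℝ^{n-1}. -/
noncomputable def psdist {m : ℕ} (A : Set (ℝ × EuclideanSpace ℝ (Fin m)))
    (x : ℝ × EuclideanSpace ℝ (Fin m)) : ℝ :=
  if x ∈ A then -pInfDist Aᶜ x else pInfDist A x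

theorem pInfDist_cont {m : ℕ} (A : Set (ℝ × EuclideanSpace ℝ (Fin m))) :
    Continuous (pInfDist A) := by
  have h : pInfDist A = fun x => Metric.infDist (WithLp.toLp 2 x) (WithLp.toLp 2 '' A) := by
    funext x
    have hd : ∀ y : ℝ × EuclideanSpace ℝ (Fin m),
        pdist x y = dist (WithLp.toLp 2 x) (WithLp.toLp 2 y) := by
      intro y
      rw [WithLp.prod_dist_eq_of_L2]
      simp [pdist, Real.dist_eq, sq_abs]
    rw [Metric.infDist_eq_iInf, ← sInf_image', Set.image_image]
    unfold pInfDist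
    congr 1
    exact Set.image_congr (fun y _ => hd y)
  rw [h]
  exact (Metric.continuous_infDist_pt _).comp (WithLp.prod_continuous_toLp 2 _ _)

theorem psdist_integrableOn {m : ℕ} (E S : Set (ℝ × EuclideanSpace ℝ (Fin m)))
    (hE : MeasurableSet E) (hS : Bornology.IsBounded S) :
    IntegrableOn (psdist E) S := by
  obtain ⟨M, hM⟩ := hS.subset_closedBall 0
  have hg : Continuous (fun x => |pInfDist E x| + |pInfDist Eᶜ x|) :=
    (pInfDist_cont E).abs.add (pInfDist_cont Eᶜ).abs
  have hi := hg.continuousOn.integrableOn_compact (μ := volume)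
    (isCompact_closedBall (0 : ℝ × EuclideanSpace ℝ (Fin m)) M)
  refine IntegrableOn.mono_set ?_ hM
  refine Integrable.mono' hi ?_ ?_
  · apply Measurable.aestronglyMeasurable
    exact Measurable.ite hE (pInfDist_cont Eᶜ).measurable.neg (pInfDist_cont E).measurable
  · refine Filter.Eventually.of_forall (fun x => ?_)
    unfold psdist
    have h1 := abs_nonneg (pInfDist E x)
    have h2 := abs_nonneg (pInfDist Eᶜ x)
    split_ifs <;> simp only [Real.norm_eq_abs, abs_neg] <;> linarith

theorem slice_ineq {α : Type*} [MeasurableSpace α] (μ : Measure α) (A B : Set α)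
    (hA : MeasurableSet A) (hB : MeasurableSet B) (hAf : μ A ≠ ⊤) (hAB : μ A = μ B)
    (f : α → ℝ) (c : ℝ) (h1 : ∀ x ∈ A, f x ≤ c) (h2 : ∀ x, x ∉ A → c ≤ f x)
    (hfA : Integrable (A.indicator f) μ) (hfB : Integrable (B.indicator f) μ) :
    ∫ x, A.indicator f x ∂μ ≤ ∫ x, B.indicator f x ∂μ := by
  have hBf : μ B ≠ ⊤ := hAB ▸ hAf
  have iA : Integrable (A.indicator fun _ => c) μ :=
    (integrable_indicator_iff hA).2 (integrableOn_const hAf)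
  have iB : Integrable (B.indicator fun _ => c) μ :=
    (integrable_indicator_iff hB).2 (integrableOn_const hBf)
  have key : ∫ x, (A.indicator f x - A.indicator (fun _ => c) x) ∂μ
      ≤ ∫ x, (B.indicator f x - B.indicator (fun _ => c) x) ∂μ := by
    refine integral_mono (hfA.sub iA) (hfB.sub iB) (fun x => ?_)
    have := h1 x
    have := h2 x
    by_cases ha : x ∈ A <;> by_cases hb : x ∈ B <;> simp_all
  rw [integral_sub hfA iA, integral_sub hfB iB, integral_indicator hA (f := fun _ => c),
    integral_indicator hB (f := fun _ => c), setIntegral_const, setIntegral_const] at key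
  have : μ.real A = μ.real B := by simp [Measure.real, hAB]
  rw [this] at key
  linarith

/-- If E ⊆ ℝⁿ = ℝ × ℝ^{n-1} is bounded, measurable, Schwarz symmetric with
respect to the x₁-axis (its slices are centered open balls), and each section
x' ↦ d̄_E(x₁,x') of its signed distance function is radially symmetric and nondecreasing
in |x'|, then for every bounded measurable F, the Schwarz symmetrization F* of F
(slices are centered open balls of the same (n-1)-measure as the slices of F) satisfies
∫_{F*} d̄_E ≤ ∫_F d̄_E. -/
theorem schwarz_symmetrization_decreases_dissipation
    (m : ℕ) (hm : 1 ≤ m)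
    (E : Set (ℝ × EuclideanSpace ℝ (Fin m)))
    (hEmeas : MeasurableSet E) (hEbd : Bornology.IsBounded E)
    (ρ : ℝ → ℝ)
    (hEsym : ∀ t : ℝ, {y : EuclideanSpace ℝ (Fin m) | (t, y) ∈ E} = Metric.ball 0 (ρ t))
    (hrad : ∀ (t : ℝ) (y z : EuclideanSpace ℝ (Fin m)), ‖y‖ = ‖z‖ →
      psdist E (t, y) = psdist E (t, z))
    (hmono : ∀ (t : ℝ) (y z : EuclideanSpace ℝ (Fin m)), ‖y‖ ≤ ‖z‖ →
      psdist E (t, y) ≤ psdist E (t, z))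
    (F : Set (ℝ × EuclideanSpace ℝ (Fin m)))
    (hFmeas : MeasurableSet F) (hFbd : Bornology.IsBounded F)
    (R : ℝ → ℝ)
    (Fstar : Set (ℝ × EuclideanSpace ℝ (Fin m)))
    (hFstar : Fstar = {p : ℝ × EuclideanSpace ℝ (Fin m) | p.2 ∈ Metric.ball 0 (R p.1)})
    (hFstarMeas : MeasurableSet Fstar)
    (hslices : ∀ t : ℝ, volume (Metric.ball (0 : EuclideanSpace ℝ (Fin m)) (R t))
      = volume {y : EuclideanSpace ℝ (Fin m) | (t, y) ∈ F}) :
    ∫ x in Fstar, psdist E x ≤ ∫ x in F, psdist E x := by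
  have hne : Nonempty (Fin m) := ⟨⟨0, hm⟩⟩
  have hFsbd : Bornology.IsBounded Fstar := by
    obtain ⟨M, hM⟩ := hFbd.subset_closedBall 0
    refine (Metric.isBounded_closedBall (x := (0 : ℝ × EuclideanSpace ℝ (Fin m)))
      (r := M)).subset ?_
    rintro ⟨t, y⟩ hp
    rw [hFstar] at hp
    have hy : ‖y‖ < R t := by simpa using hp
    have hR : 0 < R t := (norm_nonneg y).trans_lt hy
    have hpos : 0 < volume {y : EuclideanSpace ℝ (Fin m) | (t, y) ∈ F} := by
      rw [← hslices]; exact Metric.measure_ball_pos _ _ hR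
    obtain ⟨z, hz⟩ := nonempty_of_measure_ne_zero hpos.ne'
    have hz' := hM hz
    simp only [mem_closedBall, dist_zero_right, Prod.norm_def, max_le_iff] at hz' ⊢
    refine ⟨hz'.1, hy.le.trans ?_⟩
    by_contra! hlt
    have hM0 : 0 ≤ M := (norm_nonneg _).trans hz'.1
    have hle : volume (Metric.ball (0 : EuclideanSpace ℝ (Fin m)) (R t))
        ≤ volume (Metric.closedBall (0 : EuclideanSpace ℝ (Fin m)) M) := by
      rw [hslices]
      refine measure_mono (fun w hw => ?_)
      have hw' := hM hw
      simp only [mem_closedBall, dist_zero_right, Prod.norm_def, max_le_iff] at hw' ⊢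
      exact hw'.2
    rw [Measure.addHaar_ball _ _ hR.le, Measure.addHaar_closedBall _ _ hM0] at hle
    have hv0 := (Metric.measure_ball_pos volume (0 : EuclideanSpace ℝ (Fin m)) one_pos).ne'
    have hvt : volume (Metric.ball (0 : EuclideanSpace ℝ (Fin m)) 1) ≠ ⊤ :=
      measure_ball_lt_top.ne
    rw [ENNReal.mul_le_mul_iff_left hv0 hvt, ENNReal.ofReal_le_ofReal_iff (by positivity)] at hle
    have := pow_lt_pow_left₀ hlt hM0 (n := Module.finrank ℝ (EuclideanSpace ℝ (Fin m)))
      (by simp; omega)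
    linarith
  have i1 : Integrable (Fstar.indicator (psdist E))
      ((volume : Measure ℝ).prod (volume : Measure (EuclideanSpace ℝ (Fin m)))) :=
    (integrable_indicator_iff hFstarMeas).2 (psdist_integrableOn E Fstar hEmeas hFsbd)
  have i2 : Integrable (F.indicator (psdist E))
      ((volume : Measure ℝ).prod (volume : Measure (EuclideanSpace ℝ (Fin m)))) :=
    (integrable_indicator_iff hFmeas).2 (psdist_integrableOn E F hEmeas hFbd)
  rw [← integral_indicator hFstarMeas, ← integral_indicator hFmeas, Measure.volume_eq_prod,
    integral_prod _ i1, integral_prod _ i2]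
  refine integral_mono_ae i1.integral_prod_left i2.integral_prod_left ?_
  filter_upwards [i1.prod_right_ae, i2.prod_right_ae] with t h1 h2
  have hind : ∀ S : Set (ℝ × EuclideanSpace ℝ (Fin m)),
      (fun y => S.indicator (psdist E) (t, y))
        = ({y | (t, y) ∈ S} : Set _).indicator (fun y => psdist E (t, y)) := by
    intro S; funext y; by_cases h : (t, y) ∈ S <;> simp [h]
  have hs : {y | (t, y) ∈ Fstar} = Metric.ball 0 (R t) := by rw [hFstar]; rfl
  simp only [hind, hs] at h1 h2 ⊢
  have hFt : MeasurableSet {y : EuclideanSpace ℝ (Fin m) | (t, y) ∈ F} :=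
    measurable_prodMk_left hFmeas
  by_cases hR : 0 ≤ R t
  · obtain ⟨z, hz⟩ := exists_norm_eq (EuclideanSpace ℝ (Fin m)) hR
    refine slice_ineq volume _ _ measurableSet_ball hFt measure_ball_lt_top.ne (hslices t)
      _ (psdist E (t, z)) ?_ ?_ h1 h2
    · intro y hy
      exact hmono t y z (by rw [hz]; exact (by simpa using hy : ‖y‖ < R t).le)
    · intro y hy
      exact hmono t z y (by rw [hz]; simpa using hy)
  · have hb : Metric.ball (0 : EuclideanSpace ℝ (Fin m)) (R t) = ∅ :=
      Metric.ball_eq_empty.2 (not_le.1 hR).le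
    have hz : volume {y : EuclideanSpace ℝ (Fin m) | (t, y) ∈ F} = 0 := by
      rw [← hslices, hb, measure_empty]
    rw [integral_indicator hFt, setIntegral_measure_zero _ hz, hb]
    simp
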